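/- arXiv:1911.12877 — 6 statements merged into one kernel-verified Lean document; each statement's English description precedes it below -/
import Mathlib

section
/- Let G be a subgroup of the group of permutations of Fin n and let L(G) be its restriction set. Let α be a linearly ordered set and let M : Fin n → α be injective. Then there is at most one g ∈ G such that M ∘ g satisfies the restrictions, i.e., such that M (g i) > M (g k) for every pair (i, k) ∈ L(G). -/
/-! If `g₁ ≠ g₂`, look at the first index `i` at which they differ. Then `g₁⁻¹ * g₂` and `g₂⁻¹ * g₁`
both fix every `j < i` and move `i`, so each yields an element of the restriction set; these
force `M (g₂ i) < M (g₁ i)` and `M (g₁ i) < M (g₂ i)`, a contradiction.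
-/

/-- The restriction set of a subgroup `G` of permutations of `Fin n`:
pairs `(i, k)` with `k ≠ i` for which there exists `g ∈ G` with `g j = j` for all
`j < i` and `g i = k`. -/
def restrictionSet {n : ℕ} (G : Subgroup (Equiv.Perm (Fin n))) : Set (Fin n × Fin n) :=
  {p | p.2 ≠ p.1 ∧ ∃ g ∈ G, (∀ j, j < p.1 → g j = j) ∧ g p.1 = p.2}

theorem stmt_1 {n : ℕ} (G : Subgroup (Equiv.Perm (Fin n))) {α : Type*} [LinearOrder α]
    (M : Fin n → α) (hM : Function.Injective M) :
    ∀ g₁ ∈ G, ∀ g₂ ∈ G,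
      (∀ i k : Fin n, (i, k) ∈ restrictionSet G → M (g₁ k) < M (g₁ i)) →
      (∀ i k : Fin n, (i, k) ∈ restrictionSet G → M (g₂ k) < M (g₂ i)) →
      g₁ = g₂ := by
  intro g₁ h₁ g₂ h₂ r₁ r₂
  ext1 i
  -- Strong induction amounts to looking at the first index where `g₁` and `g₂` differ.
  induction i using WellFoundedLT.induction with
  | ind i ih =>
  by_contra hne
  -- If `a` and `b` first differ at `i`, then `a⁻¹ * b` witnesses the restriction
  -- `(i, a⁻¹ (b i))`, which for `a` reads `M (b i) < M (a i)`; this is used with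
  -- `(a, b)` equal to `(g₁, g₂)` and to `(g₂, g₁)`.
  have key : ∀ a ∈ G, ∀ b ∈ G,
      (∀ i k : Fin n, (i, k) ∈ restrictionSet G → M (a k) < M (a i)) →
      (∀ j, j < i → a j = b j) → a i ≠ b i → M (b i) < M (a i) := by
    intro a ha b hb r hab hi
    have hmem : (i, a⁻¹ (b i)) ∈ restrictionSet G := by
      refine ⟨fun h => hi ?_, a⁻¹ * b, G.mul_mem (G.inv_mem ha) hb, fun j hj => ?_, rfl⟩
      · exact (Equiv.Perm.inv_eq_iff_eq.mp h).symm
      · exact Equiv.Perm.inv_eq_iff_eq.mpr (hab j hj).symm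
    simpa using r _ _ hmem
  exact lt_asymm (key g₁ h₁ g₂ h₂ r₁ ih hne)
    (key g₂ h₂ g₁ h₁ r₂ (fun j hj => (ih j hj).symm) (Ne.symm hne))
end

section
/- Let G be a subgroup of the group of permutations of Fin n and let L(G) be its restriction set. Let α be a linearly ordered set and let M : Fin n → α be injective. Then there exists at least one g ∈ G such that M ∘ g satisfies the restrictions, i.e., such that M (g i) > M (g k) for every pair (i, k) ∈ L(G). -/
/- Choose `g ∈ G` making `M ∘ g` lexicographically maximal. If `h ∈ G` fixes every `j < i` and
sends `i` to `k`, then `M ∘ (g * h)` agrees with `M ∘ g` before `i` and takes the value `M (g k)`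
at `i`, so maximality gives `M (g k) ≤ M (g i)`, and injectivity makes this strict. -/
theorem stmt_2 {n : ℕ} (G : Subgroup (Equiv.Perm (Fin n))) {α : Type*} [LinearOrder α]
    (M : Fin n → α) (hM : Function.Injective M) :
    ∃ g ∈ G, ∀ i k : Fin n, (i, k) ∈ restrictionSet G → M (g k) < M (g i) := by
  obtain ⟨⟨g, hg⟩, hmax⟩ := Finite.exists_max (fun g : G => toLex (fun j => M (g.1 j)))
  refine ⟨g, hg, ?_⟩
  rintro i k ⟨hne, h, hh, hfix, hik⟩
  dsimp only at hne hfix hik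
  by_contra hlt
  have hlt' : M (g i) < M (g k) :=
    lt_of_le_of_ne (not_lt.mp hlt) fun e => hne (g.injective (hM e)).symm
  refine (hmax ⟨g * h, G.mul_mem hg hh⟩).not_gt ⟨i, fun j hj => ?_, ?_⟩
  · simp [hfix j hj]
  · simpa [hik] using hlt'
end

section
/- Let G be a subgroup of the group of permutations of Fin n with restriction set L(G), let k ∈ Fin n, and let g ∈ G satisfy g j = j for all j < k. Then the map (a, b) ↦ (a, g b) is a bijection of the set {(a, b) ∈ L(G) : a < k} onto itself; in particular, if (a, b) ∈ L(G) and a < k, then (a, g b) ∈ L(G). -/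
theorem restrictionSet_apply_mem {n : ℕ} {G : Subgroup (Equiv.Perm (Fin n))} {k : Fin n}
    {g : Equiv.Perm (Fin n)} (hg : g ∈ G) (hfix : ∀ j, j < k → g j = j) {a b : Fin n}
    (hab : (a, b) ∈ restrictionSet G) (hak : a < k) : (a, g b) ∈ restrictionSet G := by
  obtain ⟨hne, h, hh, hlt, heq⟩ := hab
  refine ⟨fun e => hne (g.injective (e.trans (hfix a hak).symm)), g * h, G.mul_mem hg hh, ?_, ?_⟩
  · intro j hj
    rw [Equiv.Perm.mul_apply, hlt j hj, hfix j (lt_trans hj hak)]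
  · exact congrArg g heq

theorem stmt_3 {n : ℕ} (G : Subgroup (Equiv.Perm (Fin n))) (k : Fin n)
    (g : Equiv.Perm (Fin n)) (hg : g ∈ G) (hfix : ∀ j, j < k → g j = j) :
    Set.BijOn (fun p : Fin n × Fin n => (p.1, g p.2))
        {p | p ∈ restrictionSet G ∧ p.1 < k} {p | p ∈ restrictionSet G ∧ p.1 < k} ∧
      ∀ a b : Fin n, (a, b) ∈ restrictionSet G → a < k → (a, g b) ∈ restrictionSet G := by
  have hfix_inv : ∀ j, j < k → g⁻¹ j = j := fun j hj =>
    Equiv.Perm.inv_eq_iff_eq.mpr (hfix j hj).symm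
  refine ⟨Set.InvOn.bijOn (f' := fun p => (p.1, g⁻¹ p.2)) ⟨?_, ?_⟩ ?_ ?_,
    fun a b hab hak => restrictionSet_apply_mem hg hfix hab hak⟩
  · rintro ⟨a, b⟩ -
    simp
  · rintro ⟨a, b⟩ -
    simp
  · rintro ⟨a, b⟩ ⟨hab, hak⟩
    exact ⟨restrictionSet_apply_mem hg hfix hab hak, hak⟩
  · rintro ⟨a, b⟩ ⟨hab, hak⟩
    exact ⟨restrictionSet_apply_mem (G.inv_mem hg) hfix_inv hab hak, hak⟩
end

section
/- Let G be a subgroup of the group of permutations of Fin n with restriction set L(G). For each k ∈ Fin n such that the set {a : (a, k) ∈ L(G)} is nonempty, let c(k) denote the maximum element of that set. Then for every injective map M : Fin n → α into a linearly ordered set α: if M (c(k)) > M k holds for every such k, then M a > M b holds for every pair (a, b) ∈ L(G). -/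
theorem lt_of_mem_restrictionSet {n : ℕ} {G : Subgroup (Equiv.Perm (Fin n))} {a b : Fin n}
    (hab : (a, b) ∈ restrictionSet G) : a < b := by
  obtain ⟨hne, g, -, hfix, hg⟩ := hab
  by_contra hlt
  have hba : b < a := lt_of_le_of_ne (not_lt.mp hlt) hne
  -- `g` would fix `b`, so `a` and `b` would have the same image.
  exact hne (g.injective ((hfix b hba).trans hg.symm))

/-- If `g` fixes all points below `a` and sends `a` to `b`, and `f` fixes all points below `c > a`
and sends `c` to `b`, then `f⁻¹ * g` fixes all points below `a` and sends `a` to `c`. -/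
theorem restrictionSet_of_common_right {n : ℕ} {G : Subgroup (Equiv.Perm (Fin n))}
    {a b c : Fin n} (hab : (a, b) ∈ restrictionSet G) (hcb : (c, b) ∈ restrictionSet G)
    (hac : a < c) : (a, c) ∈ restrictionSet G := by
  obtain ⟨-, g, hgG, hgfix, hg⟩ := hab
  obtain ⟨-, f, hfG, hffix, hf⟩ := hcb
  refine ⟨hac.ne', f⁻¹ * g, G.mul_mem (G.inv_mem hfG) hgG, fun j hj => ?_, ?_⟩
  · rw [Equiv.Perm.mul_apply, Equiv.Perm.inv_eq_iff_eq, hgfix j hj,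
      hffix j (lt_trans hj hac)]
  · rw [Equiv.Perm.mul_apply, Equiv.Perm.inv_eq_iff_eq]
    exact hg.trans hf.symm

theorem stmt_4 {n : ℕ} (G : Subgroup (Equiv.Perm (Fin n))) {α : Type*} [LinearOrder α]
    (c : Fin n → Fin n)
    (hc : ∀ k : Fin n, {a : Fin n | (a, k) ∈ restrictionSet G}.Nonempty →
      IsGreatest {a : Fin n | (a, k) ∈ restrictionSet G} (c k))
    (M : Fin n → α) (hM : Function.Injective M)
    (h : ∀ k : Fin n, {a : Fin n | (a, k) ∈ restrictionSet G}.Nonempty → M k < M (c k)) :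
    ∀ a b : Fin n, (a, b) ∈ restrictionSet G → M b < M a := by
  intro a b
  induction b using WellFoundedLT.induction generalizing a with
  | ind b ih =>
    intro hab
    obtain ⟨hcb, hmax⟩ := hc b ⟨a, hab⟩
    have hM_lt := h b ⟨a, hab⟩
    rcases (hmax hab).eq_or_lt with heq | hlt
    · rwa [heq]
    · exact hM_lt.trans (ih (c b) (lt_of_mem_restrictionSet hcb) a
        (restrictionSet_of_common_right hab hcb hlt))
end

section
/- Let G be a subgroup of the group of permutations of Fin n with restriction set L(G). Then the Lebesgue measure of the set {x : Fin n → ℝ | x i ∈ [0, 1] for all i, and x k < x i for every pair (i, k) ∈ L(G)} equals 1 / |G|, the reciprocal of the order of G. -/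
open MeasureTheory Set

/-- The points that satisfy all the strict inequalities prescribed by the restriction set. -/
def restrictionRegion {n : ℕ} (G : Subgroup (Equiv.Perm (Fin n))) : Set (Fin n → ℝ) :=
  {x | ∀ i k : Fin n, (i, k) ∈ restrictionSet G → x k < x i}

lemma lex_lt_of_mem_region {n : ℕ} {G : Subgroup (Equiv.Perm (Fin n))} {x : Fin n → ℝ}
    (hx : x ∈ restrictionRegion G) {g : Equiv.Perm (Fin n)} (hg : g ∈ G) (h1 : g ≠ 1) :
    toLex (x ∘ g) < toLex x := by
  -- `i` is the first point moved by `g`.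
  obtain ⟨i, hi, hmin⟩ : ∃ i, g i ≠ i ∧ ∀ j, j < i → g j = j := by
    obtain ⟨a, ha⟩ : ∃ a, g a ≠ a := by
      by_contra! h
      exact h1 (Equiv.ext h)
    obtain ⟨i, hi, hmin⟩ := WellFounded.has_min (wellFounded_lt (α := Fin n)) {a | g a ≠ a} ⟨a, ha⟩
    exact ⟨i, hi, fun j hj => by_contra fun h => hmin j h hj⟩
  exact ⟨i, fun j hj => congrArg x (hmin j hj), hx i (g i) ⟨hi, g, hg, hmin, rfl⟩⟩

lemma mem_region_of_lex_max {n : ℕ} {G : Subgroup (Equiv.Perm (Fin n))} {x : Fin n → ℝ}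
    (hinj : Function.Injective x) (hmax : ∀ g ∈ G, toLex (x ∘ g) ≤ toLex x) :
    x ∈ restrictionRegion G := by
  rintro i k ⟨hk, g, hg, hfix, hgk⟩
  obtain rfl : g i = k := hgk
  by_contra h
  have hlt : x i < x (g i) := lt_of_le_of_ne (not_lt.mp h) fun e => hk (hinj e).symm
  have : toLex x < toLex (x ∘ g) := ⟨i, fun j hj => congrArg x (hfix j hj).symm, hlt⟩
  exact absurd (hmax g hg) (not_le.mpr this)

lemma exists_comp_mem_region {n : ℕ} (G : Subgroup (Equiv.Perm (Fin n))) {x : Fin n → ℝ}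
    (hinj : Function.Injective x) : ∃ g : G, x ∘ (g : Equiv.Perm (Fin n)) ∈ restrictionRegion G := by
  obtain ⟨g, hg⟩ := Finite.exists_max (fun g : G => toLex (x ∘ (g : Equiv.Perm (Fin n))))
  refine ⟨g, mem_region_of_lex_max (hinj.comp (Equiv.injective _)) fun h hh => ?_⟩
  exact hg (g * ⟨h, hh⟩)

lemma comp_mem_region_unique {n : ℕ} {G : Subgroup (Equiv.Perm (Fin n))} {x : Fin n → ℝ}
    {g h : G} (hg : x ∘ (g : Equiv.Perm (Fin n)) ∈ restrictionRegion G)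
    (hh : x ∘ (h : Equiv.Perm (Fin n)) ∈ restrictionRegion G) : g = h := by
  by_contra hne
  have key : ∀ a b : G, a ≠ b → x ∘ (a : Equiv.Perm (Fin n)) ∈ restrictionRegion G →
      toLex (x ∘ (b : Equiv.Perm (Fin n))) < toLex (x ∘ (a : Equiv.Perm (Fin n))) := by
    intro a b hab ha
    have := lex_lt_of_mem_region ha (a⁻¹ * b).2
      (fun e => hab (inv_mul_eq_one.mp (Subtype.ext e)))
    convert this using 2
    ext i
    simp
  exact lt_asymm (key g h hne hg) (key h g (Ne.symm hne) hh)

lemma measurePreserving_comp_perm {n : ℕ} (g : Equiv.Perm (Fin n)) :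
    MeasurePreserving (fun x : Fin n → ℝ => x ∘ g) volume volume := by
  have h := volume_measurePreserving_piCongrLeft (fun _ : Fin n => ℝ) g.symm
  have e : ⇑(MeasurableEquiv.piCongrLeft (fun _ : Fin n => ℝ) g.symm) = fun x => x ∘ g := by
    ext x i
    simpa using MeasurableEquiv.piCongrLeft_apply_apply (β := fun _ : Fin n => ℝ) g.symm x (g i)
  rwa [e] at h

lemma ae_injective (n : ℕ) : ∀ᵐ x : Fin n → ℝ, Function.Injective x := by
  have h : ∀ i j : Fin n, i ≠ j → ∀ᵐ x : Fin n → ℝ, x i ≠ x j := by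
    intro i j hij
    -- The hyperplane `x i = x j` is a proper subspace, hence null.
    let f : (Fin n → ℝ) →ₗ[ℝ] ℝ := LinearMap.proj (R := ℝ) (φ := fun _ : Fin n => ℝ) i - LinearMap.proj j
    have hf : LinearMap.ker f ≠ ⊤ := by
      intro e
      have : Pi.single i (1 : ℝ) ∈ LinearMap.ker f := e ▸ Submodule.mem_top
      simp [f, hij.symm] at this
    have h0 := Measure.addHaar_submodule (volume : Measure (Fin n → ℝ)) _ hf
    rw [ae_iff]
    convert h0 using 2
    ext x
    simp [f, sub_eq_zero]
  have h' : ∀ᵐ x : Fin n → ℝ, ∀ i j : Fin n, i ≠ j → x i ≠ x j := by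
    simpa only [ae_all_iff] using h
  filter_upwards [h'] with x hx i j hij
  exact by_contra fun hne => hx i j hne hij

theorem stmt_14 {n : ℕ} (G : Subgroup (Equiv.Perm (Fin n))) :
    MeasureTheory.volume
        {x : Fin n → ℝ |
          (∀ i, x i ∈ Set.Icc (0 : ℝ) 1) ∧
            ∀ i k : Fin n, (i, k) ∈ restrictionSet G → x k < x i} =
      1 / (Nat.card G : ENNReal) := by
  set S : Set (Fin n → ℝ) := {x | (∀ i, x i ∈ Set.Icc (0 : ℝ) 1) ∧
    ∀ i k : Fin n, (i, k) ∈ restrictionSet G → x k < x i} with hS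
  have hSm : MeasurableSet S := by
    refine measurableSet_setOfPred.mpr (Measurable.and (Measurable.forall fun i => ?_)
      (Measurable.forall fun i => Measurable.forall fun k => Measurable.imp measurable_const ?_))
    · exact measurableSet_setOfPred.mp (measurableSet_Icc.preimage (measurable_pi_apply i))
    · exact measurableSet_setOfPred.mp
        (measurableSet_lt (measurable_pi_apply k) (measurable_pi_apply i))
  let T : G → Set (Fin n → ℝ) := fun g => (fun x => x ∘ (g : Equiv.Perm (Fin n))) ⁻¹' S
  have hTm : ∀ g, MeasurableSet (T g) := fun g => (measurePreserving_comp_perm g.1).measurable hSm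
  have hTv : ∀ g, volume (T g) = volume S := fun g =>
    (measurePreserving_comp_perm g.1).measure_preimage hSm.nullMeasurableSet
  have hdisj : Pairwise (Function.onFun Disjoint T) := fun g h hne =>
    Set.disjoint_left.mpr fun x hg hh => hne (comp_mem_region_unique hg.2 hh.2)
  have hcube : volume (⋃ g, T g) = 1 := by
    have h1 : volume (Set.Icc (0 : Fin n → ℝ) 1) = 1 := by
      rw [Real.volume_Icc_pi]
      simp
    rw [← h1]
    refine measure_congr ?_
    filter_upwards [ae_injective n] with x hx
    refine propext (Iff.trans Set.mem_iUnion ⟨?_, ?_⟩)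
    · rintro ⟨g, hg, -⟩
      have hb : ∀ i, x i ∈ Set.Icc (0 : ℝ) 1 := fun i => by
        simpa using hg ((g : Equiv.Perm (Fin n)).symm i)
      exact ⟨fun i => (hb i).1, fun i => (hb i).2⟩
    · rintro ⟨h0, h1⟩
      obtain ⟨g, hg⟩ := exists_comp_mem_region G hx
      exact ⟨g, fun i => ⟨h0 _, h1 _⟩, hg⟩
  rw [measure_iUnion hdisj hTm] at hcube
  have := Fintype.ofFinite G
  simp only [hTv, tsum_fintype, Finset.sum_const, Finset.card_univ, nsmul_eq_mul] at hcube
  rw [Nat.card_eq_fintype_card, one_div]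
  exact ENNReal.eq_inv_of_mul_eq_one_left (by rwa [mul_comm] at hcube)
end

section
/- Let P be a finite simple graph on a vertex set V with n vertices, let k < n, let s : Fin k → V be a fixed prefix, and let φ be an automorphism of P with φ (s j) = s j for all j < k. Let x, y ∈ V with φ x = y. Then the map T ↦ φ ∘ T is a bijection from the set of valid schedules T of P satisfying T j = s j for all j < k and T k = x onto the set of valid schedules T of P satisfying T j = s j for all j < k and T k = y; moreover each schedule in the first set is equivalent to its image in the second set. -/
/-! Composing a schedule with an automorphism preserves validity, because automorphisms preserve
adjacency and the order of positions is untouched (`ValidSchedule.trans_iso`). Both `φ` and `φ⁻¹`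
fix the prefix, and `φ⁻¹` sends `y` back to `x`, so `T ↦ φ⁻¹ ∘ T` maps the second set into the first
and is a two-sided inverse of `T ↦ φ ∘ T`. The equivalence of `T` and `φ ∘ T` is witnessed by `φ`
itself. -/

/-- A schedule `S` of a graph `P` is valid if every vertex except the first is adjacent
to some earlier vertex in the schedule. -/
def ValidSchedule {n : ℕ} {V : Type*} (P : SimpleGraph V) (S : Fin n ≃ V) : Prop :=
  ∀ i : Fin n, 0 < (i : ℕ) → ∃ j, j < i ∧ P.Adj (S j) (S i)

/-- Two schedules are equivalent if one is obtained from the other by composing with an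
automorphism of the pattern. -/
def SchedEquiv {n : ℕ} {V : Type*} (P : SimpleGraph V) (S₁ S₂ : Fin n ≃ V) : Prop :=
  ∃ ψ : P ≃g P, ∀ i : Fin n, S₂ i = ψ (S₁ i)

theorem ValidSchedule.trans_iso {n : ℕ} {V : Type*} {P : SimpleGraph V} {T : Fin n ≃ V}
    (hT : ValidSchedule P T) (φ : P ≃g P) : ValidSchedule P (T.trans φ.toEquiv) := by
  intro i hi
  obtain ⟨j, hj, hadj⟩ := hT i hi
  exact ⟨j, hj, φ.map_adj_iff.mpr hadj⟩

theorem stmt_17 {n : ℕ} {V : Type*} [Fintype V] (hV : Fintype.card V = n)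
    (P : SimpleGraph V) (k : ℕ) (hk : k < n) (s : Fin k → V)
    (φ : P ≃g P) (hφ : ∀ j : Fin k, φ (s j) = s j)
    (x y : V) (hxy : φ x = y) :
    Set.BijOn (fun T : Fin n ≃ V => T.trans φ.toEquiv)
        {T : Fin n ≃ V | ValidSchedule P T ∧
          (∀ j : Fin k, T (Fin.castLE hk.le j) = s j) ∧ T ⟨k, hk⟩ = x}
        {T : Fin n ≃ V | ValidSchedule P T ∧
          (∀ j : Fin k, T (Fin.castLE hk.le j) = s j) ∧ T ⟨k, hk⟩ = y} ∧
      ∀ T : Fin n ≃ V,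
        (ValidSchedule P T ∧ (∀ j : Fin k, T (Fin.castLE hk.le j) = s j) ∧ T ⟨k, hk⟩ = x) →
          SchedEquiv P T (T.trans φ.toEquiv) := by
  have hφ' : ∀ j : Fin k, φ.symm (s j) = s j := fun j => by
    rw [← hφ j, φ.symm_apply_apply, hφ j]
  have hyx : φ.symm y = x := by rw [← hxy, φ.symm_apply_apply]
  refine ⟨⟨?_, ?_, ?_⟩, fun T _ => ⟨φ, fun _ => rfl⟩⟩
  · rintro T ⟨hv, hs, hx⟩
    refine ⟨hv.trans_iso φ, fun j => ?_, ?_⟩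
    · change φ (T _) = s j
      rw [hs, hφ]
    · change φ (T _) = y
      rw [hx, hxy]
  · intro T₁ _ T₂ _ h
    ext i
    exact φ.injective (DFunLike.congr_fun h i)
  · rintro T ⟨hv, hs, hy⟩
    refine ⟨T.trans φ.symm.toEquiv, ⟨hv.trans_iso φ.symm, fun j => ?_, ?_⟩, ?_⟩
    · change φ.symm (T _) = s j
      rw [hs, hφ']
    · change φ.symm (T _) = x
      rw [hy, hyx]
    · ext i
      exact φ.apply_symm_apply (T i)
end
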